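/- arXiv:1909.03638 — 2 statements merged into one kernel-verified Lean document; each statement's English description precedes it below -/
import Mathlib

section
/- Let S and A be finite nonempty types, r : S → A → ℝ, P : S → A → S → ℝ a transition kernel with P s a s' ≥ 0 and ∑_{s'} P s a s' = 1 for all s, a, and γ ∈ [0,1). Let (g_S, g_A) be an MDP symmetry, i.e. bijections with r (g_S s) (g_A a) = r s a and P (g_S s) (g_A a) (g_S s') = P s a s' for all s, a, s'. Then the Bellman optimality operator T intertwines with the symmetry: for every Q : S → A → ℝ, one has T (fun s a => Q (g_S s) (g_A a)) = fun s a => (T Q) (g_S s) (g_A a). -/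
/-- For a finite MDP with an MDP symmetry `(gS, gA)`, the Bellman
optimality operator `T` intertwines with the symmetry:
`T (fun s a => Q (gS s) (gA a)) = fun s a => (T Q) (gS s) (gA a)`. -/
theorem bellman_intertwines_symmetry
    {S A : Type*} [Fintype S] [Fintype A] [Nonempty S] [Nonempty A]
    (r : S → A → ℝ) (P : S → A → S → ℝ)
    (hP0 : ∀ s a s', 0 ≤ P s a s') (hP1 : ∀ s a, ∑ s', P s a s' = 1)
    (γ : ℝ) (hγ0 : 0 ≤ γ) (hγ1 : γ < 1)
    (gS : S ≃ S) (gA : A ≃ A)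
    (hr : ∀ s a, r (gS s) (gA a) = r s a)
    (hPsym : ∀ s a s', P (gS s) (gA a) (gS s') = P s a s')
    (T : (S → A → ℝ) → (S → A → ℝ))
    (hT : ∀ Q s a, T Q s a =
      r s a + γ * ∑ s', P s a s' *
        (Finset.univ.sup' Finset.univ_nonempty (fun a' => Q s' a'))) :
    ∀ Q : S → A → ℝ,
      T (fun s a => Q (gS s) (gA a)) = fun s a => T Q (gS s) (gA a) := by
  intro Q
  have sup_comp (f : A → ℝ) :
      Finset.univ.sup' Finset.univ_nonempty (fun a => f (gA a)) =
        Finset.univ.sup' Finset.univ_nonempty f := by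
    simp only [Finset.sup'_univ_eq_ciSup]
    exact gA.iSup_comp
  funext s a
  rw [hT, hT, hr, ← gS.sum_comp (fun s' => P (gS s) (gA a) s' * _)]
  simp only [hPsym, sup_comp]
end

section
/- Let E and F be real normed vector spaces, G a finite group, and ρ : G → (E →L[ℝ] E) a linear representation of G on E (i.e. ρ(1) = id and ρ(g h) = ρ(g) ∘ ρ(h)). Let L : E → ℝ satisfy L (ρ(g) x) = L x for all g ∈ G and x ∈ E. Let V = {x ∈ E : ρ(g) x = x for all g ∈ G} be the fixed subspace and let ι : F →L[ℝ] E be a continuous linear map whose range equals V. If θ* ∈ F is a local minimum of the restricted loss L ∘ ι and L is Fréchet differentiable at p := ι θ*, then the Fréchet derivative of L at p is zero: fderiv ℝ L p = 0, i.e. p is a critical point of the unrestricted loss L on all of E. -/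
/-- The derivative of a function invariant under a continuous linear map `A` is itself invariant
under `A` at every fixed point of `A`. -/
theorem fderiv_apply_of_invariant_of_fixed
    {E : Type*} [NormedAddCommGroup E] [NormedSpace ℝ E]
    {L : E → ℝ} {A : E →L[ℝ] E} {p : E} (hL : ∀ x, L (A x) = L x) (hp : A p = p)
    (hdiff : DifferentiableAt ℝ L p) (v : E) :
    fderiv ℝ L p (A v) = fderiv ℝ L p v := by
  have hcomp : HasFDerivAt (L ∘ A) ((fderiv ℝ L p).comp A) p :=
    HasFDerivAt.comp p (by rw [hp]; exact hdiff.hasFDerivAt) A.hasFDerivAt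
  rw [show L ∘ A = L from funext hL] at hcomp
  exact DFunLike.congr_fun (hcomp.unique hdiff.hasFDerivAt) v

/-- The sum of `v` over the group is fixed by the group. -/
theorem map_sum_orbit_eq
    {E : Type*} [NormedAddCommGroup E] [NormedSpace ℝ E]
    {G : Type*} [Group G] [Fintype G] {ρ : G → E →L[ℝ] E}
    (hρm : ∀ g h : G, ρ (g * h) = (ρ g).comp (ρ h)) (g : G) (v : E) :
    ρ g (∑ h, ρ h v) = ∑ h, ρ h v := by
  rw [map_sum]
  exact Fintype.sum_equiv (Equiv.mulLeft g) _ _ fun h => by simp [hρm]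

/-- If `L : E → ℝ` is invariant under a linear representation `ρ` of a
finite group `G`, `ι : F →L[ℝ] E` has range equal to the fixed subspace of `ρ`, and
`θ*` is a local minimum of the restricted loss `L ∘ ι` with `L` differentiable at
`p = ι θ*`, then `p` is a critical point of `L` on all of `E`. -/
theorem fixed_subspace_local_min_is_critical
    {E F : Type*} [NormedAddCommGroup E] [NormedSpace ℝ E]
    [NormedAddCommGroup F] [NormedSpace ℝ F]
    {G : Type*} [Group G] [Finite G]
    (ρ : G → E →L[ℝ] E)
    (hρ1 : ρ 1 = ContinuousLinearMap.id ℝ E)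
    (hρm : ∀ g h : G, ρ (g * h) = (ρ g).comp (ρ h))
    (L : E → ℝ) (hLinv : ∀ (g : G) (x : E), L (ρ g x) = L x)
    (ι : F →L[ℝ] E)
    (hrange : Set.range ι = {x : E | ∀ g : G, ρ g x = x})
    (θstar : F) (hmin : IsLocalMin (L ∘ ι) θstar)
    (hdiff : DifferentiableAt ℝ L (ι θstar)) :
    fderiv ℝ L (ι θstar) = 0 := by
  have := Fintype.ofFinite G
  have hp : ∀ g, ρ g (ι θstar) = ι θstar := hrange.subset ⟨θstar, rfl⟩
  have hcrit : (fderiv ℝ L (ι θstar)).comp ι = 0 :=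
    hmin.hasFDerivAt_eq_zero (hdiff.hasFDerivAt.comp θstar ι.hasFDerivAt)
  ext v
  obtain ⟨w, hw⟩ : ∑ h, ρ h v ∈ Set.range ι :=
    hrange.superset fun g => map_sum_orbit_eq hρm g v
  have hsum : fderiv ℝ L (ι θstar) (∑ h, ρ h v) = 0 := by
    rw [← hw]
    exact DFunLike.congr_fun hcrit w
  simp only [map_sum, fderiv_apply_of_invariant_of_fixed (hLinv _) (hp _) hdiff] at hsum
  simpa using hsum
end
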